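/- arXiv:1310.8623 — 2 statements merged into one kernel-verified Lean document; each statement's English description precedes it below -/
import Mathlib

section
/- Let p be a prime and let m, n be integers with gcd(m, n, p) = 1. Then |S(m,n;p)| ≤ 2√p. -/
/-- The Kloosterman sum `S(m,n;c)` (a real number). -/
noncomputable def Kloosterman (m n : ℤ) (c : ℕ) : ℝ :=
  ∑ a ∈ (Finset.range c).filter (fun a => Nat.Coprime a c),
    (Complex.exp (2 * Real.pi * Complex.I *
      (((m * a + n * (((a : ZMod c)⁻¹).val : ℤ) : ℤ) : ℂ) / c))).re

/-!
Let `K_E` be the Kloosterman sum over an even-degree extension `E` of a finite field `F` of odd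
characteristic with `q` elements, for an additive character of `F` composed with the trace.
Stepanov's method bounds the number of points of each curve `a x + b / x = y ^ q - y + d` over `E`
from above by `|E| + (4 q + 2) √|E|` once `E` is large. The average of these numbers over `d` is
`|E| - 1` and their Fourier transform is `|E| K_E`, so `|K_E| ≤ (4 q + 2) √|E| + 1`.

The quadratic Hasse–Davenport relation `K ^ 2 + K_E = 2 |F|`, for `[E : F] = 2`, holds because each
quadratic polynomial `X ^ 2 - s X + t` over `F` has its roots either in `F` or conjugate in `E`. It
turns `|K| ≥ (2 + δ) √|F|` into `|K_E| ≥ (2 + 4 δ) √|E|`, so along a tower of quadratic extensions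
any excess over `2` outgrows the constant in Stepanov's bound.
-/

section Stepanov

open Finset Polynomial

lemma eq_zero_of_sq_eq_sq_mul {R : Type*} [CommRing R] [IsDomain R] [UniqueFactorizationMonoid R]
    {f r s : R} (hf : Squarefree f) (hu : ¬ IsUnit f) (h : r ^ 2 = s ^ 2 * f) :
    r = 0 ∧ s = 0 := by
  obtain rfl | hs := eq_or_ne s 0
  · simpa using h
  obtain ⟨t, rfl⟩ : s ∣ r :=
    (UniqueFactorizationMonoid.pow_dvd_pow_iff_dvd two_ne_zero).1 ⟨f, h⟩
  have ht : t ^ 2 = f := mul_left_cancel₀ (pow_ne_zero 2 hs) (by rw [← mul_pow, h])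
  exact absurd (ht ▸ (hf t (by rw [← sq, ht])).pow 2) hu

lemma squarefree_map_mulEquiv {M N : Type*} [Monoid M] [Monoid N] (φ : M ≃* N) {x : M}
    (hx : Squarefree x) : Squarefree (φ x) := fun y hy => by
  have hdvd := map_dvd φ.symm hy
  rw [map_mul, φ.symm_apply_apply] at hdvd
  exact (MulEquiv.isUnit_map φ.symm).1 (hx _ hdvd)

lemma X_pow_dvd_pow_sub_C_coeff_zero {R : Type*} [CommRing R] (p n : ℕ) [ExpChar R p] (f : R[X]) :
    X ^ p ^ n ∣ f ^ p ^ n - C (f.coeff 0 ^ p ^ n) := by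
  rw [C_pow, ← sub_pow_expChar_pow]
  exact pow_dvd_pow_of_dvd (by simp [X_dvd_iff]) _

lemma forall_eq_zero_of_sum_mul_X_pow_eq_zero {R : Type*} [CommRing R] {M J : ℕ}
    {u : Fin J → R[X]} (hu : ∀ j, X ^ M ∣ u j → u j = 0)
    (h : ∑ j, u j * X ^ (j * M : ℕ) = 0) (j : Fin J) : u j = 0 := by
  induction J with
  | zero => exact j.elim0
  | succ J ih =>
    have hsplit : u 0 + (∑ j : Fin J, u j.succ * X ^ (j * M : ℕ)) * X ^ M = 0 := by
      rw [← h, Fin.sum_univ_succ, sum_mul]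
      simp [add_mul, pow_add, mul_assoc]
    have h0 : u 0 = 0 := hu 0 ⟨-∑ j : Fin J, u j.succ * X ^ (j * M : ℕ), by
      linear_combination hsplit⟩
    rw [h0, zero_add] at hsplit
    have htail := (isRegular_X_pow M).right.mul_right_eq_zero_iff.1 hsplit
    exact Fin.cases h0 (ih (fun j => hu j.succ) htail) j

lemma exists_ne_zero_map_eq_zero_of_natCard_lt {A B : Type*} [AddGroup A] [AddGroup B]
    (φ : A →+ B) {S : Set B} [Finite S] (hS : ∀ u, φ u ∈ S) (h : Nat.card S < Nat.card A) :
    ∃ u ≠ 0, φ u = 0 := by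
  have hinj : ¬ Function.Injective (fun u => (⟨φ u, hS u⟩ : S)) := fun hinj =>
    h.not_ge (Nat.card_le_card_of_injective _ hinj)
  obtain ⟨u, v, huv, hne⟩ := Function.not_injective_iff.1 hinj
  refine ⟨u - v, sub_ne_zero.2 hne, ?_⟩
  rw [map_sub, sub_eq_zero]
  exact congrArg Subtype.val huv

lemma natCard_degreeLT (R : Type*) [CommRing R] (n : ℕ) :
    Nat.card (degreeLT R n) = Nat.card R ^ n := by
  rw [Nat.card_congr (degreeLTEquiv R n).toEquiv, Nat.card_fun, Nat.card_fin]

lemma mem_degreeLT_succ_iff_natDegree_le {R : Type*} [CommRing R] {b : ℕ} {g : R[X]} :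
    g ∈ degreeLT R (b + 1) ↔ g.natDegree ≤ b := by
  rw [mem_degreeLT, degree_lt_iff_coeff_zero, natDegree_le_iff_coeff_eq_zero]
  rfl

/-- The auxiliary polynomial of Stepanov's method for the curve `w ^ 2 = f(y)`. At a point over a
field with `M ^ 2` elements, `f ^ h` with `2 * h = M + 1` stands for `w ^ (M + 1)`, which is fixed
by `M`-th powers. -/
noncomputable def stepanovPoly {R : Type*} [CommRing R] (f : R[X]) (h M : ℕ) {J : ℕ}
    (r s : Fin J → R[X]) : R[X] :=
  ∑ j, (r j + s j * f ^ h) * X ^ (j * M : ℕ)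

/-- The polynomial which takes the same values as `stepanovPoly f h M r s ^ M` at the points `y` of
a field with `M ^ 2` elements for which `f(y)` is a square. Since `y ^ (M ^ 2) = y`, its degree is
much lower, so that it can be made to vanish identically. -/
noncomputable def stepanovTwist {R : Type*} [CommRing R] (f : R[X]) (h M : ℕ) {J : ℕ}
    (r s : Fin J → R[X]) : R[X] :=
  ∑ j : Fin J, (r j ^ M + s j ^ M * f ^ h) * X ^ (j : ℕ)

lemma natDegree_stepanovPoly_le {R : Type*} [CommRing R] (f : R[X]) (h M : ℕ) {b J : ℕ}
    {r s : Fin J → R[X]} (hr : ∀ j, (r j).natDegree ≤ b) (hs : ∀ j, (s j).natDegree ≤ b) :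
    (stepanovPoly f h M r s).natDegree ≤ b + h * f.natDegree + J * M := by
  refine natDegree_sum_le_of_forall_le _ _ fun j _ => natDegree_mul_le.trans (add_le_add ?_ ?_)
  · exact natDegree_add_le_of_degree_le ((hr j).trans (Nat.le_add_right _ _))
      (natDegree_mul_le.trans (add_le_add (hs j) natDegree_pow_le))
  · exact (natDegree_X_pow_le _).trans (Nat.mul_le_mul_right _ j.2.le)

lemma natDegree_stepanovTwist_le {R : Type*} [CommRing R] (f : R[X]) (h M : ℕ) {b J : ℕ}
    {r s : Fin (J + 1) → R[X]} (hr : ∀ j, (r j).natDegree ≤ b) (hs : ∀ j, (s j).natDegree ≤ b) :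
    (stepanovTwist f h M r s).natDegree ≤ M * b + h * f.natDegree + J := by
  refine natDegree_sum_le_of_forall_le _ _ fun j _ => natDegree_mul_le.trans (add_le_add ?_ ?_)
  · have hpow {g : R[X]} (hg : g.natDegree ≤ b) : (g ^ M).natDegree ≤ M * b :=
      natDegree_pow_le.trans (Nat.mul_le_mul_left M hg)
    exact natDegree_add_le_of_degree_le ((hpow (hr j)).trans (Nat.le_add_right _ _))
      (natDegree_mul_le.trans (add_le_add (hpow (hs j)) natDegree_pow_le))
  · exact (natDegree_X_pow_le _).trans (Nat.le_of_lt_succ j.2)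

lemma stepanovTwist_add {R : Type*} [CommRing R] (p n : ℕ) [ExpChar R p] (f : R[X]) (h : ℕ) {J : ℕ}
    (r r' s s' : Fin J → R[X]) :
    stepanovTwist f h (p ^ n) (r + r') (s + s') =
      stepanovTwist f h (p ^ n) r s + stepanovTwist f h (p ^ n) r' s' := by
  simp only [stepanovTwist, Pi.add_apply, add_pow_expChar_pow, ← sum_add_distrib]
  exact sum_congr rfl fun j _ => by ring

variable {F : Type*} [Field F] (p n : ℕ) [ExpChar F p]

lemma exists_stepanovTwist_eq_zero [Finite F] (f : F[X]) {b h J : ℕ}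
    (hJ : p ^ n * b + h * f.natDegree + J + 1 < 2 * (b + 1) * (J + 1)) :
    ∃ r s : Fin (J + 1) → F[X], (∀ j, (r j).natDegree ≤ b) ∧ (∀ j, (s j).natDegree ≤ b) ∧
      (∃ j, r j ≠ 0 ∨ s j ≠ 0) ∧ stepanovTwist f h (p ^ n) r s = 0 := by
  let V := Fin (J + 1) → degreeLT F (b + 1)
  let coe (v : V) (j : Fin (J + 1)) : F[X] := v j
  have natDegree_coe_le (v : V) (j) : (coe v j).natDegree ≤ b :=
    mem_degreeLT_succ_iff_natDegree_le.1 (v j).2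
  let φ : V × V →+ F[X] :=
    AddMonoidHom.mk' (fun v => stepanovTwist f h (p ^ n) (coe v.1) (coe v.2))
      fun v w => stepanovTwist_add p n f h (coe v.1) (coe w.1) (coe v.2) (coe w.2)
  let S := degreeLT F (p ^ n * b + h * f.natDegree + J + 1)
  have φ_mem (v) : φ v ∈ S := mem_degreeLT_succ_iff_natDegree_le.2
    (natDegree_stepanovTwist_le f h _ (natDegree_coe_le v.1) (natDegree_coe_le v.2))
  have : Finite S := Module.finite_of_finite F
  -- The twist is only additive in `(r, s)`, so elements are counted instead of dimensions.
  have card_lt : Nat.card S < Nat.card (V × V) := by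
    rw [Nat.card_prod, Nat.card_fun, natCard_degreeLT, natCard_degreeLT, ← pow_mul, ← pow_add,
      Nat.card_fin]
    exact Nat.pow_lt_pow_right Finite.one_lt_card (by linarith)
  obtain ⟨v, hv, hφ⟩ := exists_ne_zero_map_eq_zero_of_natCard_lt φ φ_mem card_lt
  refine ⟨coe v.1, coe v.2, natDegree_coe_le v.1, natDegree_coe_le v.2, ?_, hφ⟩
  contrapose! hv
  exact Prod.ext (funext fun j => Subtype.ext (hv j).1) (funext fun j => Subtype.ext (hv j).2)

-- Squaring turns `f ^ h` into `f ^ (p ^ n + 1)`, which is congruent to a constant times `f`; the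
-- resulting congruence between squares is an equality because its degrees are below `p ^ n`.
lemma eq_zero_of_X_pow_dvd_add_mul_pow {f : F[X]} (hf : Squarefree f) (hu : ¬ IsUnit f)
    (hf0 : f.coeff 0 ≠ 0) {b h : ℕ} (hh : 2 * h = p ^ n + 1) (hb : 2 * b + f.natDegree < p ^ n)
    {r s : F[X]} (hr : r.natDegree ≤ b) (hs : s.natDegree ≤ b)
    (hdvd : X ^ p ^ n ∣ r + s * f ^ h) : r = 0 ∧ s = 0 := by
  obtain ⟨u, hu'⟩ := X_pow_dvd_pow_sub_C_coeff_zero p n f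
  obtain ⟨v, hv⟩ := hdvd
  set c := C (f.coeff 0 ^ p ^ n)
  have hc : IsUnit c := isUnit_C.2 (pow_ne_zero _ hf0).isUnit
  have hcong : X ^ p ^ n ∣ r ^ 2 - s ^ 2 * (f * c) := by
    have hsq : (f ^ h) ^ 2 = f ^ p ^ n * f := by rw [← pow_mul, mul_comm, hh, pow_succ]
    refine ⟨v * (r - s * f ^ h) + s ^ 2 * f * u, ?_⟩
    linear_combination (r - s * f ^ h) * hv + s ^ 2 * f * hu' + s ^ 2 * hsq
  have hdeg : (r ^ 2 - s ^ 2 * (f * c)).natDegree < p ^ n := by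
    refine lt_of_le_of_lt (natDegree_sub_le_of_le ?_ ?_) (max_lt hb hb)
    · exact (natDegree_pow_le_of_le 2 hr).trans (Nat.le_add_right _ _)
    · exact natDegree_mul_le_of_le (natDegree_pow_le_of_le 2 hs) (natDegree_mul_C_le _ _)
  have heq := sub_eq_zero.1 (eq_zero_of_dvd_of_natDegree_lt hcong (by rwa [natDegree_X_pow]))
  have hassoc : Associated (f * c) f := associated_mul_unit_left f c hc
  exact eq_zero_of_sq_eq_sq_mul (hassoc.squarefree_iff.2 hf) (mt hassoc.isUnit hu) heq

lemma eq_zero_of_stepanovPoly_eq_zero {f : F[X]} (hf : Squarefree f) (hu : ¬ IsUnit f)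
    (hf0 : f.coeff 0 ≠ 0) {b h J : ℕ} (hh : 2 * h = p ^ n + 1)
    (hb : 2 * b + f.natDegree < p ^ n) {r s : Fin J → F[X]} (hr : ∀ j, (r j).natDegree ≤ b)
    (hs : ∀ j, (s j).natDegree ≤ b) (h0 : stepanovPoly f h (p ^ n) r s = 0) (j : Fin J) :
    r j = 0 ∧ s j = 0 := by
  have key (j) (hj : X ^ p ^ n ∣ r j + s j * f ^ h) : r j = 0 ∧ s j = 0 :=
    eq_zero_of_X_pow_dvd_add_mul_pow p n hf hu hf0 hh hb (hr j) (hs j) hj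
  refine key j ?_
  rw [forall_eq_zero_of_sum_mul_X_pow_eq_zero (fun j hj => ?_) h0 j]
  · exact dvd_zero _
  · obtain ⟨hr0, hs0⟩ := key j hj
    rw [hr0, hs0, zero_mul, add_zero]

variable [Fintype F]

lemma eval_stepanovPoly_pow (hcard : Fintype.card F = (p ^ n) ^ 2) {f : F[X]} {h J : ℕ}
    (hh : 2 * h = p ^ n + 1) (r s : Fin J → F[X]) {y : F} (hy : IsSquare (f.eval y)) :
    (stepanovPoly f h (p ^ n) r s).eval y ^ p ^ n = (stepanovTwist f h (p ^ n) r s).eval y := by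
  have pow_pow_eq (x : F) : (x ^ p ^ n) ^ p ^ n = x := by
    rw [← pow_mul, ← sq, ← hcard, FiniteField.pow_card]
  have hfix : (f.eval y ^ h) ^ p ^ n = f.eval y ^ h := by
    obtain ⟨w, hw⟩ := hy
    have hwh : f.eval y ^ h = w ^ p ^ n * w := by rw [hw, ← sq, ← pow_mul, hh, pow_succ]
    rw [hwh, mul_pow, pow_pow_eq, mul_comm]
  simp only [stepanovPoly, stepanovTwist, eval_finsetSum, sum_pow_char_pow]
  refine sum_congr rfl fun j _ => ?_
  have hX : (y ^ (j * p ^ n : ℕ)) ^ p ^ n = y ^ (j : ℕ) := by rw [pow_mul, pow_pow_eq]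
  simp only [eval_mul, eval_add, eval_pow, eval_X, mul_pow, add_pow_expChar_pow, hfix, hX]

lemma card_isSquare_eval_le_add_mul_add_mul [DecidableEq F] (hcard : Fintype.card F = (p ^ n) ^ 2)
    {f : F[X]} (hf : Squarefree f) (hu : ¬ IsUnit f) (hf0 : f.coeff 0 ≠ 0) {b h J : ℕ}
    (hh : 2 * h = p ^ n + 1) (hb : 2 * b + f.natDegree < p ^ n)
    (hJ : p ^ n * b + h * f.natDegree + J + 1 < 2 * (b + 1) * (J + 1)) :
    #{y | IsSquare (f.eval y)} ≤ b + h * f.natDegree + (J + 1) * p ^ n := by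
  obtain ⟨r, s, hr, hs, ⟨j, hj⟩, htwist⟩ := exists_stepanovTwist_eq_zero p n f hJ
  have hne : stepanovPoly f h (p ^ n) r s ≠ 0 := fun h0 => by
    have := eq_zero_of_stepanovPoly_eq_zero p n hf hu hf0 hh hb hr hs h0 j
    tauto
  refine (card_le_degree_of_subset_roots fun y hy => ?_).trans
    (natDegree_stepanovPoly_le f h (p ^ n) hr hs)
  rw [mem_roots hne, IsRoot, ← pow_eq_zero_iff (expChar_pow_pos F p n).ne',
    eval_stepanovPoly_pow p n hcard hh r s (by simpa using hy), htwist, eval_zero]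

lemma two_mul_card_isSquare_eval_le_of_coeff_zero_ne_zero [DecidableEq F]
    (hcard : Fintype.card F = (p ^ n) ^ 2) (hodd : Odd (p ^ n)) {f : F[X]} (hf : Squarefree f)
    (hu : ¬ IsUnit f) (hf0 : f.coeff 0 ≠ 0) {e : ℕ} (hdeg : f.natDegree ≤ 2 * e)
    (he : 2 * e ^ 2 + 2 * e < p ^ n) :
    2 * #{y | IsSquare (f.eval y)} ≤ (p ^ n) ^ 2 + (4 * e + 2) * p ^ n := by
  obtain ⟨k, hk⟩ := hodd
  -- This `b` is the largest for which `2 * b + 2 * e < p ^ n`.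
  obtain ⟨b, rfl⟩ : ∃ b, k = e + b := Nat.exists_eq_add_of_le (by nlinarith)
  have hh : 2 * (e + b + 1) = p ^ n + 1 := by omega
  have hterm : (e + b + 1) * f.natDegree ≤ (e + b + 1) * (2 * e) := Nat.mul_le_mul_left _ hdeg
  have hJ : p ^ n * b + (e + b + 1) * f.natDegree + (2 * e + b) + 1 <
      2 * (b + 1) * (2 * e + b + 1) := by
    rw [hk] at he ⊢
    nlinarith
  have hle := card_isSquare_eval_le_add_mul_add_mul p n hcard hf hu hf0 hh (by omega) hJ
  rw [hk] at hle ⊢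
  nlinarith

lemma two_mul_card_isSquare_eval_le [DecidableEq F] (hcard : Fintype.card F = (p ^ n) ^ 2)
    (hodd : Odd (p ^ n)) {f : F[X]} (hf : Squarefree f) (hu : ¬ IsUnit f) {e : ℕ}
    (hdeg : f.natDegree ≤ 2 * e) (he : 2 * e ^ 2 + 2 * e < p ^ n) :
    2 * #{y | IsSquare (f.eval y)} ≤ (p ^ n) ^ 2 + (4 * e + 2) * p ^ n := by
  obtain ⟨t, ht⟩ : ∃ t, f.eval t ≠ 0 := by
    by_contra! hzero
    have hlt : f.natDegree < Fintype.card F := by nlinarith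
    exact hf.ne_zero
      (eq_zero_of_natDegree_lt_card_of_eval_eq_zero f Function.injective_id hzero hlt)
  have hcount : #{y | IsSquare (f.eval y)} = #{y | IsSquare ((taylor t f).eval y)} :=
    (card_equiv (Equiv.addRight t) (by simp [taylor_eval])).symm
  rw [hcount]
  have hsq : Squarefree (taylor t f) :=
    squarefree_map_mulEquiv (taylorEquiv t : F[X] ≃* F[X]) hf
  refine two_mul_card_isSquare_eval_le_of_coeff_zero_ne_zero p n hcard hodd hsq (fun h => hu ?_)
    (by rwa [taylor_coeff_zero]) (by rwa [natDegree_taylor]) he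
  exact (MulEquiv.isUnit_map (taylorEquiv t)).1 h

end Stepanov

section KloostermanSum

open Finset

/-- The Kloosterman sum `∑ ψ (a * x + b * x⁻¹)` over the units `x` of a finite ring `R`, for an
arbitrary additive character `ψ` of `R`. -/
noncomputable def kloostermanSum {R R' : Type*} [CommRing R] [Fintype R] [CommRing R']
    (ψ : AddChar R R') (a b : R) : R' :=
  open Classical in ∑ x : Rˣ, ψ (a * x + b * ↑x⁻¹)

lemma kloostermanSum_eq_sum {R R' : Type*} [CommRing R] [Fintype R] [Fintype Rˣ] [CommRing R']
    (ψ : AddChar R R') (a b : R) : kloostermanSum ψ a b = ∑ x : Rˣ, ψ (a * x + b * ↑x⁻¹) := by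
  rw [kloostermanSum]
  congr!

lemma kloostermanSum_comm {R R' : Type*} [CommRing R] [Fintype R] [CommRing R']
    (ψ : AddChar R R') (a b : R) : kloostermanSum ψ a b = kloostermanSum ψ b a := by
  classical
  exact Fintype.sum_equiv (Equiv.inv _) _ _ fun x => by simp [add_comm]

lemma norm_kloostermanSum_le_card_units {R : Type*} [CommRing R] [Fintype R] [Fintype Rˣ]
    (ψ : AddChar R ℂ) (a b : R) : ‖kloostermanSum ψ a b‖ ≤ Fintype.card Rˣ := by
  rw [kloostermanSum_eq_sum]
  refine (norm_sum_le _ _).trans_eq ?_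
  simp only [AddChar.norm_apply, sum_const, card_univ, nsmul_one]

lemma sum_units_add_apply_zero {F M : Type*} [Field F] [Fintype F] [Fintype Fˣ] [AddCommMonoid M]
    (φ : F → M) : ∑ x : Fˣ, φ x + φ 0 = ∑ x, φ x := by
  classical
  rw [Fintype.sum_eq_add_sum_subtype_ne φ 0, add_comm]
  congr 1
  exact Fintype.sum_equiv unitsEquivNeZero _ _ fun x => rfl

lemma kloostermanSum_zero_right {F R' : Type*} [Field F] [Fintype F] [CommRing R'] [IsDomain R']
    {ψ : AddChar F R'} (hψ : ψ ≠ 1) {a : F} (ha : a ≠ 0) : kloostermanSum ψ a 0 = -1 := by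
  classical
  have hsum := AddChar.sum_mulShift a (AddChar.IsPrimitive.of_ne_one hψ)
  rw [if_neg ha, Nat.cast_zero, ← sum_units_add_apply_zero, zero_mul, ψ.map_zero_eq_one] at hsum
  simpa only [kloostermanSum_eq_sum, zero_mul, add_zero, mul_comm a] using
    eq_neg_of_add_eq_zero_left hsum

/-- The lift `ψ ∘ Tr` of an additive character `ψ` of `F` to an `F`-algebra `E`. -/
noncomputable def traceLift {F : Type*} (E : Type*) {R' : Type*} [CommRing F] [CommRing E]
    [Algebra F E] [Monoid R'] (ψ : AddChar F R') : AddChar E R' :=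
  ψ.compAddMonoidHom (Algebra.trace F E).toAddMonoidHom

lemma traceLift_apply {F E R' : Type*} [CommRing F] [CommRing E] [Algebra F E] [Monoid R']
    (ψ : AddChar F R') (x : E) : traceLift E ψ x = ψ (Algebra.trace F E x) := rfl

lemma traceLift_ne_one {F E R' : Type*} [Field F] [Field E] [Algebra F E] [FiniteDimensional F E]
    [Algebra.IsSeparable F E] [Monoid R'] {ψ : AddChar F R'} (hψ : ψ ≠ 1) :
    traceLift E ψ ≠ 1 := by
  obtain ⟨t, ht⟩ := AddChar.ne_one_iff.1 hψ
  obtain ⟨x, rfl⟩ := Algebra.trace_surjective F E t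
  exact AddChar.ne_one_iff.2 ⟨x, ht⟩

lemma traceLift_traceLift {F L E R' : Type*} [Field F] [Field L] [Field E] [Algebra F L]
    [Algebra L E] [Algebra F E] [IsScalarTower F L E] [FiniteDimensional F L]
    [FiniteDimensional L E] [Monoid R'] (ψ : AddChar F R') :
    traceLift E (traceLift L ψ) = traceLift E ψ := by
  ext x
  simp only [traceLift_apply, Algebra.trace_trace]

lemma trace_pow_card {F E : Type*} [Field F] [Fintype F] [Field E] [Algebra F E] [Finite E]
    (x : E) : Algebra.trace F E (x ^ Fintype.card F) = Algebra.trace F E x :=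
  Algebra.trace_eq_of_algEquiv (FiniteField.frobeniusAlgEquivOfAlgebraic F E) x

end KloostermanSum

section CurveCount

open Finset Polynomial

lemma separable_sq_sub_C {R : Type*} [CommRing R] {g : R[X]} (hg : IsUnit (derivative g)) {c : R}
    (h2 : IsUnit (2 : R)) (hc : IsUnit c) : (g ^ 2 - C c).Separable := by
  obtain ⟨u, hu⟩ := ((h2.mul hc).map C).exists_right_inv
  obtain ⟨v, hv⟩ := hg.exists_right_inv
  rw [map_mul, map_ofNat] at hu
  refine ⟨-2 * u, u * v * g, ?_⟩
  rw [derivative_sub, derivative_C, sub_zero, derivative_sq, map_ofNat]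
  linear_combination hu + 2 * u * g ^ 2 * hv

lemma not_isUnit_sq_sub_C {R : Type*} [CommRing R] [IsDomain R] {g : R[X]}
    (hg : derivative g ≠ 0) (c : R) : ¬ IsUnit (g ^ 2 - C c) := fun hu => by
  have hdeg := natDegree_eq_zero_of_isUnit hu
  rw [natDegree_sub_C, natDegree_pow, mul_eq_zero, or_iff_right two_ne_zero] at hdeg
  exact hg (derivative_of_natDegree_zero hdeg)

lemma card_le_two_of_forall_quadratic_eq_zero {R : Type*} [CommRing R] [IsDomain R] {a b c : R}
    (ha : a ≠ 0) {s : Finset R} (hs : ∀ x ∈ s, a * x ^ 2 + b * x + c = 0) : #s ≤ 2 := by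
  have hdeg := natDegree_quadratic (b := b) (c := c) ha
  rw [← hdeg]
  refine card_le_degree_of_subset_roots fun x hx => (mem_roots ?_).2 ?_
  · exact ne_zero_of_natDegree_gt (hdeg ▸ two_pos)
  · simpa using hs x hx

variable {E : Type*} [Field E] [Fintype E] [DecidableEq E] {a b : E}

lemma card_add_inv_eq_eval_le_two_mul (ha : a ≠ 0) (g : E[X]) :
    #{z : Eˣ × E | a * z.1 + b * ↑z.1⁻¹ = g.eval z.2} ≤
      2 * #{y | IsSquare ((g ^ 2 - C (4 * (a * b))).eval y)} := by
  have quadratic {z : Eˣ × E} (hz : a * z.1 + b * ↑z.1⁻¹ = g.eval z.2) :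
      a * (z.1 : E) ^ 2 + -g.eval z.2 * z.1 + b = 0 := by
    linear_combination (z.1 : E) * hz - b * z.1.inv_mul
  refine card_le_mul_card_image_of_maps_to (f := Prod.snd) (fun z hz => ?_) 2 fun y _ => ?_
  · rw [mem_filter_univ] at hz ⊢
    refine ⟨2 * a * z.1 - g.eval z.2, ?_⟩
    rw [eval_sub, eval_pow, eval_C]
    linear_combination -4 * a * quadratic hz
  · rw [← card_image_of_injOn (f := fun z : Eˣ × E => (z.1 : E))]
    · refine card_le_two_of_forall_quadratic_eq_zero ha (b := -g.eval y) (c := b) fun x hx => ?_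
      simp only [mem_image, mem_filter] at hx
      obtain ⟨z, ⟨⟨-, hz⟩, rfl⟩, rfl⟩ := hx
      exact quadratic hz
    · rintro z hz z' hz' hzz'
      exact Prod.ext (Units.ext hzz') ((mem_filter.1 hz).2.trans (mem_filter.1 hz').2.symm)

lemma card_add_inv_eq_eval_le (p n : ℕ) [ExpChar E p] (hcard : Fintype.card E = (p ^ n) ^ 2)
    (hodd : Odd (p ^ n)) (ha : a ≠ 0) (hb : b ≠ 0) {g : E[X]} (hg : IsUnit (derivative g)) {e : ℕ}
    (hdeg : g.natDegree ≤ e) (he : 2 * e ^ 2 + 2 * e < p ^ n) :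
    #{z : Eˣ × E | a * z.1 + b * ↑z.1⁻¹ = g.eval z.2} ≤ (p ^ n) ^ 2 + (4 * e + 2) * p ^ n := by
  have h2 : (2 : E) ≠ 0 := Ring.two_ne_zero fun hchar => by
    have heven := FiniteField.even_card_of_char_two hchar
    rw [hcard, ← Nat.even_iff] at heven
    exact Nat.not_even_iff_odd.2 hodd.pow heven
  have hc : 4 * (a * b) ≠ 0 := by
    rw [show (4 : E) = 2 * 2 by norm_num]
    exact mul_ne_zero (mul_ne_zero h2 h2) (mul_ne_zero ha hb)
  refine (card_add_inv_eq_eval_le_two_mul ha g).trans (two_mul_card_isSquare_eval_le p n hcard hodd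
    (separable_sq_sub_C hg h2.isUnit hc.isUnit).squarefree (not_isUnit_sq_sub_C hg.ne_zero _) ?_ he)
  rw [natDegree_sub_C, natDegree_pow]
  exact Nat.mul_le_mul_left 2 hdeg

end CurveCount

section CrudeBound

open Finset Polynomial

lemma norm_sum_mul_addChar_le {G : Type*} [AddCommGroup G] [Fintype G] {ψ : AddChar G ℂ}
    (hψ : ψ ≠ 1) {w : G → ℝ} {B : ℝ} (hw : ∀ d, w d ≤ B) :
    ‖∑ d, (w d : ℂ) * ψ d‖ ≤ Fintype.card G * B - ∑ d, w d := by
  -- As `ψ` sums to zero, `w` may be replaced by the nonnegative weight `B - w`.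
  have hflip : ∑ d, (w d : ℂ) * ψ d = -∑ d, ((B - w d : ℝ) : ℂ) * ψ d := by
    simp only [Complex.ofReal_sub, sub_mul, sum_sub_distrib, ← mul_sum,
      AddChar.sum_eq_zero_of_ne_one hψ, mul_zero, zero_sub, neg_neg]
  calc ‖∑ d, (w d : ℂ) * ψ d‖ = ‖∑ d, ((B - w d : ℝ) : ℂ) * ψ d‖ := by rw [hflip, norm_neg]
    _ ≤ ∑ d, ‖((B - w d : ℝ) : ℂ) * ψ d‖ := norm_sum_le _ _
    _ = ∑ d, (B - w d) := sum_congr rfl fun d _ => by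
      rw [norm_mul, AddChar.norm_apply, mul_one, Complex.norm_of_nonneg (sub_nonneg.2 (hw d))]
    _ = Fintype.card G * B - ∑ d, w d := by simp

lemma isUnit_derivative_X_pow_sub_X_add_C {R : Type*} [CommRing R] {q : ℕ} (hq : (q : R) = 0)
    (d : R) : IsUnit (derivative (X ^ q - X + C d)) := by
  simp [derivative_X_pow, hq]

/-- The number of affine points of the curve `a * x + b * x⁻¹ = y ^ q - y + d`, where `x ≠ 0`. -/
def artinSchreierCount {E : Type*} [Field E] [Fintype E] [DecidableEq E] (q : ℕ) (a b d : E) : ℕ :=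
  #{z : Eˣ × E | a * z.1 + b * ↑z.1⁻¹ = z.2 ^ q - z.2 + d}

variable {E : Type*} [Field E] [Fintype E]

lemma sum_artinSchreierCount_mul [DecidableEq E] {R : Type*} [Semiring R] (q : ℕ) (a b : E)
    (φ : E → R) :
    ∑ d, artinSchreierCount q a b d * φ d =
      ∑ x : Eˣ, ∑ y, φ (a * x + b * ↑x⁻¹ - (y ^ q - y)) := by
  rw [← Fintype.sum_prod_type', ← sum_fiberwise']
  refine sum_congr rfl fun d _ => ?_
  rw [sum_const, nsmul_eq_mul, artinSchreierCount]
  simp only [sub_eq_iff_eq_add']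

lemma sum_artinSchreierCount [DecidableEq E] (q : ℕ) (a b : E) :
    ∑ d, artinSchreierCount q a b d = (Fintype.card E - 1) * Fintype.card E := by
  simpa only [Nat.cast_id, Pi.one_apply, mul_one, sum_const, card_univ, smul_eq_mul,
    Fintype.card_units] using
    sum_artinSchreierCount_mul q a b (R := ℕ) 1

variable {F : Type*} [Field F] [Fintype F] [Algebra F E]

lemma sum_artinSchreierCount_mul_traceLift [DecidableEq E] {R : Type*} [CommRing R]
    (ψ : AddChar F R) (a b : E) :
    ∑ d, artinSchreierCount (Fintype.card F) a b d * traceLift E ψ d =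
      Fintype.card E * kloostermanSum (traceLift E ψ) a b := by
  have traceLift_sub (x y : E) :
      traceLift E ψ (x - (y ^ Fintype.card F - y)) = traceLift E ψ x := by
    simp only [traceLift_apply, map_sub, trace_pow_card, sub_self, sub_zero]
  simp only [sum_artinSchreierCount_mul, traceLift_sub, sum_const, card_univ, nsmul_eq_mul,
    ← mul_sum, kloostermanSum_eq_sum]

lemma artinSchreierCount_card_le [DecidableEq E] (hchar : ringChar F ≠ 2) {μ : ℕ}
    (hrank : Module.finrank F E = 2 * μ)
    (hμ : 2 * Fintype.card F ^ 2 + 2 * Fintype.card F < Fintype.card F ^ μ) {a b : E} (ha : a ≠ 0)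
    (hb : b ≠ 0) (d : E) :
    artinSchreierCount (Fintype.card F) a b d ≤
      Fintype.card E + (4 * Fintype.card F + 2) * Fintype.card F ^ μ := by
  have hodd : Odd (Fintype.card F ^ μ) :=
    (Nat.odd_iff.2 (FiniteField.odd_card_of_char_ne_two hchar)).pow
  have hcard : Fintype.card E = (Fintype.card F ^ μ) ^ 2 := by
    rw [Module.card_eq_pow_finrank (K := F), hrank, ← pow_mul, mul_comm]
  have hq : (Fintype.card F : E) = 0 := by
    rw [← map_natCast (algebraMap F E), FiniteField.cast_card_eq_zero, map_zero]
  obtain ⟨p, _, n, hp, hpn⟩ := FiniteField.card' F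
  have : CharP E p := charP_of_injective_algebraMap (algebraMap F E).injective p
  have : ExpChar E p := ExpChar.prime hp
  have hg := isUnit_derivative_X_pow_sub_X_add_C hq d
  have hdeg : (X ^ Fintype.card F - X + C d : E[X]).natDegree ≤ Fintype.card F := by
    rw [natDegree_add_C, FiniteField.X_pow_card_sub_X_natDegree_eq E Fintype.one_lt_card]
  have hM : Fintype.card F ^ μ = p ^ (n * μ) := by rw [hpn, pow_mul]
  rw [hM] at hodd hcard hμ ⊢
  rw [hcard]
  simpa [artinSchreierCount] using card_add_inv_eq_eval_le p _ hcard hodd ha hb hg hdeg hμ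

lemma norm_kloostermanSum_traceLift_le {ψ : AddChar F ℂ} (hψ : ψ ≠ 1) (hchar : ringChar F ≠ 2)
    {μ : ℕ} (hrank : Module.finrank F E = 2 * μ)
    (hμ : 2 * Fintype.card F ^ 2 + 2 * Fintype.card F < Fintype.card F ^ μ) {a b : E} (ha : a ≠ 0)
    (hb : b ≠ 0) :
    ‖kloostermanSum (traceLift E ψ) a b‖ ≤ (4 * Fintype.card F + 2) * Fintype.card F ^ μ + 1 := by
  classical
  set q := Fintype.card F
  have hbound := norm_sum_mul_addChar_le (traceLift_ne_one (E := E) hψ)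
    (w := fun d => artinSchreierCount q a b d) (B := Fintype.card E + (4 * q + 2) * q ^ μ)
    fun d => mod_cast artinSchreierCount_card_le hchar hrank hμ ha hb d
  simp only [Complex.ofReal_natCast] at hbound
  rw [sum_artinSchreierCount_mul_traceLift, norm_mul, Complex.norm_natCast, ← Nat.cast_sum,
    sum_artinSchreierCount, Nat.cast_mul, Nat.cast_pred Fintype.card_pos] at hbound
  refine le_of_mul_le_mul_left (hbound.trans_eq ?_) (Nat.cast_pos.2 (Fintype.card_pos (α := E)))
  ring

end CrudeBound

section QuadraticExtension

open Finset

lemma sq_sub_trace_mul_add_norm_eq_zero {R S : Type*} [CommRing R] [Nontrivial R] [CommRing S]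
    [Algebra R S] [Algebra.IsQuadraticExtension R S] (z : S) :
    z ^ 2 - algebraMap R S (Algebra.trace R S z) * z + algebraMap R S (Algebra.norm R z) = 0 := by
  let b : Module.Basis (Fin 2) R S :=
    Module.finBasisOfFinrankEq R S (Algebra.IsQuadraticExtension.finrank_eq_two R S)
  have hpoly := (Algebra.leftMulMatrix b z).aeval_self_charpoly
  rw [Matrix.charpoly_fin_two, ← Algebra.trace_eq_matrix_trace, ← Algebra.norm_eq_matrix_det]
    at hpoly
  apply Algebra.leftMulMatrix_injective b
  simpa using hpoly

lemma trace_inv_of_isQuadraticExtension {F E : Type*} [Field F] [Field E] [Algebra F E]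
    [Algebra.IsQuadraticExtension F E] (z : E) :
    Algebra.trace F E z⁻¹ = Algebra.trace F E z / Algebra.norm F z := by
  obtain rfl | hz := eq_or_ne z 0
  · simp
  have hN : Algebra.norm F z ≠ 0 := Algebra.norm_ne_zero_iff.2 hz
  have hquad := sq_sub_trace_mul_add_norm_eq_zero (R := F) z
  have hinv : Algebra.norm F z • z⁻¹ = algebraMap F E (Algebra.trace F E z) - z := by
    rw [Algebra.smul_def, ← div_eq_mul_inv, div_eq_iff hz]
    linear_combination hquad
  rw [eq_div_iff hN, mul_comm, ← smul_eq_mul, ← map_smul, hinv, map_sub, Algebra.trace_algebraMap,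
    Algebra.IsQuadraticExtension.finrank_eq_two]
  ring

lemma card_add_card_le_two_of_double_root {R : Type*} [CommRing R] [IsDomain R] [DecidableEq R]
    {A B : Finset R} {s t : R} (hAB : ∀ z ∈ A ∪ B, z ^ 2 - s * z + t = 0)
    (hdouble : ∀ r ∈ A, r ∈ B → s = 2 * r ∧ t = r ^ 2) : #A + #B ≤ 2 := by
  by_cases hdisj : Disjoint A B
  · rw [← card_union_of_disjoint hdisj]
    refine card_le_two_of_forall_quadratic_eq_zero one_ne_zero (b := -s) (c := t) fun z hz => ?_
    linear_combination hAB z hz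
  · obtain ⟨r, hrA, hrB⟩ := not_disjoint_iff.1 hdisj
    obtain ⟨rfl, rfl⟩ := hdouble r hrA hrB
    have hsub : A ∪ B ⊆ {r} := fun z hz => by
      have hz2 : (z - r) ^ 2 = 0 := by linear_combination hAB z hz
      rwa [sq_eq_zero_iff, sub_eq_zero, ← mem_singleton] at hz2
    exact add_le_add (card_le_card (subset_union_left.trans hsub))
      (card_le_card (subset_union_right.trans hsub))

lemma sum_card_filter_nsmul {α β γ M : Type*} [Fintype α] [Fintype β] [Fintype γ] [DecidableEq β]
    [DecidableEq γ] [AddCommMonoid M] (f : α → β) (g : α → γ) (φ : β × γ → M) :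
    ∑ w, #{z | f z = w.1 ∧ g z = w.2} • φ w = ∑ z, φ (f z, g z) := by
  rw [← sum_fiberwise' univ (fun z => (f z, g z)) φ]
  simp only [sum_const, Prod.ext_iff]

variable {F E : Type*} [Field F] [Fintype F] [Field E] [Fintype E] [Algebra F E]
  [Algebra.IsQuadraticExtension F E]

lemma card_add_mul_eq_add_card_trace_norm_eq_le_two [DecidableEq F] (s t : F) :
    #{z : F × F | z.1 + z.2 = s ∧ z.1 * z.2 = t} +
      #{z : E | Algebra.trace F E z = s ∧ Algebra.norm F z = t} ≤ 2 := by
  classical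
  have fst_injOn : Set.InjOn (fun z : F × F => algebraMap F E z.1)
      {z : F × F | z.1 + z.2 = s ∧ z.1 * z.2 = t} := fun z hz w hw hzw => by
    have hfst := (algebraMap F E).injective hzw
    exact Prod.ext hfst (add_left_cancel (hz.1.trans (hfst ▸ hw.1.symm)))
  rw [← card_image_of_injOn (f := fun z : F × F => algebraMap F E z.1) (by simpa using fst_injOn)]
  refine card_add_card_le_two_of_double_root (s := algebraMap F E s) (t := algebraMap F E t)
    (fun z hz => ?_) fun r hrA hrB => ?_
  · obtain hz | hz := mem_union.1 hz
    · obtain ⟨⟨x, y⟩, hxy, rfl⟩ := mem_image.1 hz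
      obtain ⟨rfl, rfl⟩ := (mem_filter.1 hxy).2
      rw [map_add, map_mul]
      ring
    · obtain ⟨rfl, rfl⟩ := (mem_filter.1 hz).2
      exact sq_sub_trace_mul_add_norm_eq_zero z
  · obtain ⟨⟨x, y⟩, -, rfl⟩ := mem_image.1 hrA
    obtain ⟨rfl, rfl⟩ := (mem_filter.1 hrB).2
    rw [Algebra.trace_algebraMap, Algebra.norm_algebraMap,
      Algebra.IsQuadraticExtension.finrank_eq_two]
    exact ⟨by rw [nsmul_eq_mul, map_mul, Nat.cast_ofNat, map_ofNat], map_pow _ _ _⟩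

lemma card_add_mul_eq_add_card_trace_norm_eq [DecidableEq F] (s t : F) :
    #{z : F × F | z.1 + z.2 = s ∧ z.1 * z.2 = t} +
      #{z : E | Algebra.trace F E z = s ∧ Algebra.norm F z = t} = 2 := by
  let count (w : F × F) : ℕ := #{z : F × F | z.1 + z.2 = w.1 ∧ z.1 * z.2 = w.2} +
      #{z : E | Algebra.trace F E z = w.1 ∧ Algebra.norm F z = w.2}
  have count_le (w : F × F) (_ : w ∈ univ) : count w ≤ 2 :=
    card_add_mul_eq_add_card_trace_norm_eq_le_two w.1 w.2
  -- The upper bound is attained at every `(s, t)` because it is attained on average.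
  have sum_count : ∑ w, count w = ∑ _w : F × F, 2 := by
    have hcard : Fintype.card E = Fintype.card F ^ 2 := by
      rw [Module.card_eq_pow_finrank (K := F), Algebra.IsQuadraticExtension.finrank_eq_two]
    have hpairs :=
      sum_card_filter_nsmul (fun z : F × F => z.1 + z.2) (fun z => z.1 * z.2) fun _ => 1
    have hext := sum_card_filter_nsmul (Algebra.trace F E) (Algebra.norm F) fun _ => 1
    simp only [smul_eq_mul, mul_one, sum_const, card_univ, Fintype.card_prod] at hpairs hext ⊢
    rw [sum_add_distrib, hpairs, hext, hcard]
    ring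
  exact (sum_eq_sum_iff_of_le count_le).1 sum_count (s, t) (mem_univ _)

lemma sum_add_mul_add_sum_trace_norm {M : Type*} [AddCommMonoid M] (φ : F × F → M) :
    ∑ z : F × F, φ (z.1 + z.2, z.1 * z.2) +
      ∑ z : E, φ (Algebra.trace F E z, Algebra.norm F z) = 2 • ∑ w, φ w := by
  classical
  rw [← sum_card_filter_nsmul (fun z : F × F => z.1 + z.2) (fun z => z.1 * z.2),
    ← sum_card_filter_nsmul (Algebra.trace F E) (Algebra.norm F), ← sum_add_distrib, smul_sum]
  exact sum_congr rfl fun w _ => by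
    rw [← add_nsmul, card_add_mul_eq_add_card_trace_norm_eq]

end QuadraticExtension

section HasseDavenport

open Finset

variable {F R : Type*} [Field F] [Fintype F] [CommRing R]

lemma kloostermanSum_eq_sum_ite [DecidableEq F] (ψ : AddChar F R) (a b : F) :
    kloostermanSum ψ a b = ∑ x, if x = 0 then 0 else ψ (a * x + b * x⁻¹) := by
  rw [kloostermanSum_eq_sum, ← sum_units_add_apply_zero fun x : F => ite (x = 0) _ _, if_pos rfl,
    add_zero]
  simp only [Units.ne_zero, if_false, Units.val_inv_eq_inv_val]

lemma sum_addChar_mul_add_mul_div [IsDomain R] {ψ : AddChar F R} (hψ : ψ ≠ 1) [DecidableEq F]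
    {a b : F} (ha : a ≠ 0) (hb : b ≠ 0) :
    ∑ w : F × F, (if w.2 = 0 then 0 else ψ (a * w.1 + b * (w.1 / w.2))) = Fintype.card F := by
  have hψ' := AddChar.IsPrimitive.of_ne_one hψ
  have inner (t : F) : ∑ s, (if t = 0 then 0 else ψ (a * s + b * (s / t))) =
      if t = -(b / a) then (Fintype.card F : R) else 0 := by
    obtain rfl | ht := eq_or_ne t 0
    · simp [eq_comm, ha, hb]
    · have hiff : t = -(b / a) ↔ a + b / t = 0 := by grind
      have hlin (s : F) : a * s + b * (s / t) = s * (a + b / t) := by ring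
      simp only [if_neg ht, hlin, hiff, AddChar.sum_mulShift _ hψ', Nat.cast_ite, Nat.cast_zero]
  rw [Fintype.sum_prod_type_right, sum_congr rfl fun t _ => inner t]
  simp

lemma kloostermanSum_sq_add_kloostermanSum_traceLift {E : Type*} [Field E] [Fintype E] [Algebra F E]
    [Algebra.IsQuadraticExtension F E] [IsDomain R] {ψ : AddChar F R} (hψ : ψ ≠ 1) {a b : F}
    (ha : a ≠ 0) (hb : b ≠ 0) :
    kloostermanSum ψ a b ^ 2 +
      kloostermanSum (traceLift E ψ) (algebraMap F E a) (algebraMap F E b) =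
        2 * Fintype.card F := by
  classical
  have htotal := sum_add_mul_add_sum_trace_norm (E := E)
    fun w : F × F => if w.2 = 0 then 0 else ψ (a * w.1 + b * (w.1 / w.2))
  rw [sum_addChar_mul_add_mul_div hψ ha hb, nsmul_eq_mul, Nat.cast_ofNat] at htotal
  rw [← htotal]
  congr 1
  · rw [sq, kloostermanSum_eq_sum_ite, sum_mul_sum, Fintype.sum_prod_type]
    refine sum_congr rfl fun x _ => sum_congr rfl fun y _ => ?_
    obtain rfl | hx := eq_or_ne x 0
    · simp
    obtain rfl | hy := eq_or_ne y 0
    · simp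
    rw [if_neg hx, if_neg hy, if_neg (mul_ne_zero hx hy), ← ψ.map_add_eq_mul]
    congr 1
    field
  · rw [kloostermanSum_eq_sum_ite]
    simp only [traceLift_apply, map_add, ← Algebra.smul_def, map_smul, smul_eq_mul,
      trace_inv_of_isQuadraticExtension, Algebra.norm_eq_zero_iff]

end HasseDavenport

section Amplification

open Filter

variable {F : Type*} [Field F] [Fintype F]

lemma le_norm_kloostermanSum_traceLift {E : Type*} [Field E] [Fintype E] [Algebra F E]
    [Algebra.IsQuadraticExtension F E] {ψ : AddChar F ℂ} (hψ : ψ ≠ 1) {a b : F} (ha : a ≠ 0)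
    (hb : b ≠ 0) {δ : ℝ} (hδ : 0 ≤ δ)
    (h : (2 + δ) * √(Fintype.card F) ≤ ‖kloostermanSum ψ a b‖) :
    (2 + 4 * δ) * √(Fintype.card E) ≤
      ‖kloostermanSum (traceLift E ψ) (algebraMap F E a) (algebraMap F E b)‖ := by
  have hcard : √(Fintype.card E) = Fintype.card F := by
    rw [Module.card_eq_pow_finrank (K := F), Algebra.IsQuadraticExtension.finrank_eq_two,
      Nat.cast_pow, Real.sqrt_sq (Nat.cast_nonneg _)]
  have hsq : (2 + δ) ^ 2 * Fintype.card F ≤ ‖kloostermanSum ψ a b‖ ^ 2 := by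
    rw [← Real.sq_sqrt (Nat.cast_nonneg (Fintype.card F)), ← mul_pow]
    exact pow_le_pow_left₀ (by positivity) h 2
  have htri := norm_sub_norm_le (kloostermanSum ψ a b ^ 2) (2 * Fintype.card F : ℂ)
  rw [norm_pow, norm_sub_rev, norm_mul, Complex.norm_two, Complex.norm_natCast] at htri
  rw [eq_sub_of_add_eq' (kloostermanSum_sq_add_kloostermanSum_traceLift (E := E) hψ ha hb), hcard]
  nlinarith [sq_nonneg δ, Nat.cast_nonneg (α := ℝ) (Fintype.card F)]

lemma exists_isQuadraticExtension (F : Type*) [Field F] [Finite F] :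
    ∃ (E : Type) (_ : Field E) (_ : Fintype E) (_ : Algebra F E),
      Algebra.IsQuadraticExtension F E := by
  obtain ⟨p, _⟩ := CharP.exists F
  have : Fact p.Prime := ⟨CharP.char_is_prime F p⟩
  exact ⟨FiniteField.Extension F p 2, inferInstance, Fintype.ofFinite _, inferInstance,
    ⟨FiniteField.finrank_extension F p 2⟩⟩

lemma exists_finrank_eq_two_pow_le_norm_kloostermanSum_traceLift {ψ : AddChar F ℂ} (hψ : ψ ≠ 1)
    {a b : F} (ha : a ≠ 0) (hb : b ≠ 0) {δ : ℝ} (hδ : 0 ≤ δ)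
    (h : (2 + δ) * √(Fintype.card F) ≤ ‖kloostermanSum ψ a b‖) (k : ℕ) :
    ∃ (E : Type) (_ : Field E) (_ : Fintype E) (_ : Algebra F E),
      Module.finrank F E = 2 ^ (k + 1) ∧ (2 + 4 ^ (k + 1) * δ) * √(Fintype.card E) ≤
        ‖kloostermanSum (traceLift E ψ) (algebraMap F E a) (algebraMap F E b)‖ := by
  induction k with
  | zero =>
    obtain ⟨E, _, _, _, _⟩ := exists_isQuadraticExtension F
    refine ⟨E, inferInstance, inferInstance, inferInstance,
      Algebra.IsQuadraticExtension.finrank_eq_two F E, ?_⟩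
    simpa only [zero_add, pow_one] using le_norm_kloostermanSum_traceLift (E := E) hψ ha hb hδ h
  | succ k ih =>
    obtain ⟨L, _, _, _, hrank, hL⟩ := ih
    obtain ⟨E, _, _, _, _⟩ := exists_isQuadraticExtension L
    let : Algebra F E := ((algebraMap L E).comp (algebraMap F L)).toAlgebra
    have : IsScalarTower F L E := .of_algebraMap_eq fun _ => rfl
    refine ⟨E, inferInstance, inferInstance, inferInstance, ?_, ?_⟩
    · rw [← Module.finrank_mul_finrank F L E, hrank,
        Algebra.IsQuadraticExtension.finrank_eq_two, ← pow_succ]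
    · have hE := le_norm_kloostermanSum_traceLift (E := E) (traceLift_ne_one hψ)
        ((map_ne_zero _).2 ha) ((map_ne_zero _).2 hb) (by positivity) hL
      rwa [traceLift_traceLift, ← mul_assoc, ← pow_succ'] at hE

lemma exists_lt_pow_two_pow_and_lt_four_pow_mul {q : ℕ} (hq : 1 < q) {δ : ℝ} (hδ : 0 < δ) (A : ℕ)
    (B : ℝ) : ∃ k : ℕ, A < q ^ 2 ^ k ∧ B < 4 ^ (k + 1) * δ := by
  have hA : Tendsto (fun k : ℕ => q ^ 2 ^ k) atTop atTop :=
    (tendsto_pow_atTop_atTop_of_one_lt hq).comp (tendsto_pow_atTop_atTop_of_one_lt one_lt_two)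
  have hB : Tendsto (fun k : ℕ => (4 : ℝ) ^ (k + 1) * δ) atTop atTop :=
    ((tendsto_add_atTop_iff_nat 1).2
      (tendsto_pow_atTop_atTop_of_one_lt (by norm_num))).atTop_mul_const hδ
  exact ((hA.eventually_gt_atTop A).and (hB.eventually_gt_atTop B)).exists

lemma norm_kloostermanSum_le_of_ne_zero (hchar : ringChar F ≠ 2) {ψ : AddChar F ℂ} (hψ : ψ ≠ 1)
    {a b : F} (ha : a ≠ 0) (hb : b ≠ 0) : ‖kloostermanSum ψ a b‖ ≤ 2 * √(Fintype.card F) := by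
  by_contra! hlt
  set q := Fintype.card F
  have hq : 1 < q := Fintype.one_lt_card
  have hsqrt : 0 < √(q : ℝ) := Real.sqrt_pos.2 (mod_cast hq.pos)
  obtain ⟨δ, hδ, h⟩ : ∃ δ > 0, (2 + δ) * √q ≤ ‖kloostermanSum ψ a b‖ :=
    ⟨‖kloostermanSum ψ a b‖ / √q - 2, sub_pos.2 ((lt_div_iff₀ hsqrt).2 hlt), by
      rw [add_sub_cancel, div_mul_cancel₀ _ hsqrt.ne']⟩
  obtain ⟨k, hqk, hδk⟩ :=
    exists_lt_pow_two_pow_and_lt_four_pow_mul hq hδ (2 * q ^ 2 + 2 * q) (4 * q + 1)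
  obtain ⟨E, _, _, _, hrank, hE⟩ :=
    exists_finrank_eq_two_pow_le_norm_kloostermanSum_traceLift hψ ha hb hδ.le h k
  have hM : √(Fintype.card E) = (q : ℝ) ^ 2 ^ k := by
    rw [Module.card_eq_pow_finrank (K := F), hrank, pow_succ, pow_mul, Nat.cast_pow, Nat.cast_pow,
      Real.sqrt_sq (by positivity)]
  have hle := norm_kloostermanSum_traceLift_le (E := E) hψ hchar (hrank.trans (pow_succ' 2 k)) hqk
    ((map_ne_zero (algebraMap F E)).2 ha) ((map_ne_zero (algebraMap F E)).2 hb)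
  have hone : (1 : ℝ) ≤ (q : ℝ) ^ 2 ^ k := one_le_pow₀ (mod_cast hq.le)
  rw [hM] at hE
  nlinarith

lemma norm_kloostermanSum_le (hchar : ringChar F ≠ 2) {ψ : AddChar F ℂ} (hψ : ψ ≠ 1)
    {a b : F} (hab : a ≠ 0 ∨ b ≠ 0) : ‖kloostermanSum ψ a b‖ ≤ 2 * √(Fintype.card F) := by
  have norm_neg_one_le : ‖(-1 : ℂ)‖ ≤ 2 * √(Fintype.card F) := by
    have hq : (1 : ℝ) ≤ √(Fintype.card F) := Real.one_le_sqrt.2 (mod_cast Fintype.card_pos)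
    rw [norm_neg, norm_one]
    linarith
  obtain rfl | ha := eq_or_ne a 0
  · rwa [kloostermanSum_comm, kloostermanSum_zero_right hψ (hab.resolve_left (by simp))]
  obtain rfl | hb := eq_or_ne b 0
  · rwa [kloostermanSum_zero_right hψ ha]
  exact norm_kloostermanSum_le_of_ne_zero hchar hψ ha hb

end Amplification

section Kloosterman

open Finset

lemma kloosterman_eq_re_kloostermanSum (m n : ℤ) (c : ℕ) [NeZero c] :
    Kloosterman m n c = (kloostermanSum ZMod.stdAddChar (m : ZMod c) n).re := by
  rw [Kloosterman, kloostermanSum_eq_sum, Complex.re_sum]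
  refine sum_bij (fun a ha => ZMod.unitOfCoprime a (mem_filter.1 ha).2) (fun _ _ => mem_univ _)
    (fun a ha b hb hab => ?_) (fun u _ => ?_) fun a ha => ?_
  · have hcast : (a : ZMod c) = b := congrArg Units.val hab
    rw [← ZMod.val_cast_of_lt (mem_range.1 (mem_filter.1 ha).1), hcast,
      ZMod.val_cast_of_lt (mem_range.1 (mem_filter.1 hb).1)]
  · refine ⟨(u : ZMod c).val, ?_, Units.ext (ZMod.natCast_zmod_val _)⟩
    exact mem_filter.2 ⟨mem_range.2 (ZMod.val_lt _), ZMod.val_coe_unit_coprime u⟩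
  · have harg : (m * (a : ZMod c) + n * (a : ZMod c)⁻¹ : ZMod c) =
        ((m * a + n * ((a : ZMod c)⁻¹.val : ℤ) : ℤ) : ZMod c) := by
      push_cast
      rw [ZMod.natCast_zmod_val]
    rw [← ZMod.inv_coe_unit, ZMod.coe_unitOfCoprime, harg, ZMod.stdAddChar_coe, mul_div_assoc]

lemma intCast_ne_zero_or_intCast_ne_zero {p : ℕ} (hp : p ≠ 1) {m n : ℤ}
    (h : Int.gcd m (Int.gcd n p) = 1) : (m : ZMod p) ≠ 0 ∨ (n : ZMod p) ≠ 0 := by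
  by_contra! hmn
  simp only [ZMod.intCast_zmod_eq_zero_iff_dvd] at hmn
  have hdvd := Int.dvd_coe_gcd hmn.1 (Int.dvd_coe_gcd hmn.2 dvd_rfl)
  rw [h, Int.natCast_dvd_natCast] at hdvd
  exact hp (Nat.dvd_one.1 hdvd)

end Kloosterman

/-- Weil's bound for Kloosterman sums of prime moduli. -/
theorem weil_bound (p : ℕ) (hp : p.Prime) (m n : ℤ)
    (h : Int.gcd m (Int.gcd n (p : ℤ)) = 1) :
    |Kloosterman m n p| ≤ 2 * Real.sqrt p := by
  have : Fact p.Prime := ⟨hp⟩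
  rw [kloosterman_eq_re_kloostermanSum]
  refine (Complex.abs_re_le_norm _).trans ?_
  obtain rfl | hp2 := eq_or_ne p 2
  · refine (norm_kloostermanSum_le_card_units _ _ _).trans ?_
    rw [ZMod.card_units_eq_totient, Nat.totient_two, Nat.cast_one, Nat.cast_ofNat]
    linarith [Real.one_le_sqrt.2 (one_le_two (α := ℝ))]
  · have hψ : (ZMod.stdAddChar : AddChar (ZMod p) ℂ) ≠ 1 := by
      simpa only [AddChar.mulShift_one] using ZMod.isPrimitive_stdAddChar p one_ne_zero
    simpa only [ZMod.card] using norm_kloostermanSum_le (by rwa [ZMod.ringChar_zmod_n]) hψ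
      (intCast_ne_zero_or_intCast_ne_zero hp.ne_one h)
end

section
/- Define F: [0,1] → [0,1] by F(x) = (2/π)(x√(1−x²) + arcsin x). For each x ∈ [0,1] let y(x) ∈ [0,1] be the unique solution of F(y(x)) = 1 − F(x). Then ∫₀¹ x · y(x) · (4/π)√(1−x²) dx ≥ 0.11109. -/
open MeasureTheory

/-- The cumulative distribution function `F(x) = μ^{(1)}([−x,x])
= (2/π)(x√(1−x²) + arcsin x)` of the Sato–Tate measure in `cos θ`. -/
noncomputable def satoTateCDF (x : ℝ) : ℝ :=
  (2 / Real.pi) * (x * Real.sqrt (1 - x ^ 2) + Real.arcsin x)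

/-!
Let `f` be the Sato–Tate density on `[0, 1]` and `M u = ∫ t in 0..u, t * f t`. Differentiating
`F (y x) = 1 - F x` gives `(M ∘ y)' = -y * f`, so integration by parts turns the integral of
`x * y x * f x` into that of `M ∘ y`. Both `y` and `f` are nonnegative and decreasing, so `M ∘ y`
is convex and every midpoint sum bounds its integral from below; 24 nodes suffice.

A lower bound `sin φ ≤ y (sin θ)` means `F (sin θ) + F (sin φ) ≤ 1`, that is
`θ + φ + R ≤ π / 2` with `R = sin θ cos θ + sin φ cos φ`, or equivalently
`sin (θ + φ) ≤ cos R`. The last inequality involves only `sin θ`, `sin φ`, their cosines and a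
cosine, so it is certified in rational arithmetic. Finally `M (sin φ) = 4 / (3π) (1 - cos³ φ)`.
-/

open Set

section Analysis

theorem continuousOn_of_comp_isCompact {X Y Z : Type*} [TopologicalSpace X] [TopologicalSpace Y]
    [TopologicalSpace Z] [T2Space Z] {F : Y → Z} {y : X → Y} {s : Set X} {K : Set Y}
    (hK : IsCompact K) (hF : ContinuousOn F K) (hinj : InjOn F K) (hy : MapsTo y s K)
    (hFy : ContinuousOn (F ∘ y) s) : ContinuousOn y s := by
  have := isCompact_iff_compactSpace.mp hK
  have hemb : Topology.IsClosedEmbedding (K.domRestrict F) :=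
    hF.domRestrict.isClosedEmbedding hinj.injective
  rw [continuousOn_iff_continuous_domRestrict] at hFy ⊢
  have hlift : Continuous (hy.restrict y s K) := hemb.isInducing.continuous_iff.mpr hFy
  exact continuous_subtype_val.comp hlift

theorem hasDerivAt_of_comp_hasStrictDerivAt {𝕜 : Type*} [NontriviallyNormedField 𝕜]
    [CompleteSpace 𝕜] {F y : 𝕜 → 𝕜} {F' d x : 𝕜} (hF : HasStrictDerivAt F F' (y x))
    (hF' : F' ≠ 0) (hy : ContinuousAt y x) (hFy : HasDerivAt (F ∘ y) d x) :
    HasDerivAt y (F'⁻¹ * d) x := by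
  refine ((hF.to_localInverse hF').hasDerivAt.comp x hFy).congr_of_eventuallyEq ?_
  filter_upwards [hy.eventually (hF.eventually_left_inverse hF')] with z hz using hz.symm

variable {f : ℝ → ℝ} {a b : ℝ}

theorem midpoint_mul_le_integral_of_convexOn (hab : a ≤ b) (hf : ConvexOn ℝ (Icc a b) f)
    (hint : IntervalIntegrable f volume a b) :
    (b - a) * f ((a + b) / 2) ≤ ∫ x in a..b, f x := by
  have hreflect : ∫ x in a..b, f (a + b - x) = ∫ x in a..b, f x := by simp
  have hint' : IntervalIntegrable (fun x ↦ f (a + b - x)) volume a b := by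
    simpa using (hint.comp_sub_left (a + b)).symm
  have hmid : ∀ x ∈ Icc a b, 2 * f ((a + b) / 2) ≤ f x + f (a + b - x) := by
    intro x hx
    have hx' : a + b - x ∈ Icc a b := ⟨by linarith [hx.2], by linarith [hx.1]⟩
    have h := hf.2 hx hx' (by norm_num : (0 : ℝ) ≤ 1 / 2) (by norm_num : (0 : ℝ) ≤ 1 / 2)
      (by norm_num)
    rw [show (1 / 2 : ℝ) • x + (1 / 2 : ℝ) • (a + b - x) = (a + b) / 2 by
      simp only [smul_eq_mul]; ring] at h
    simp only [smul_eq_mul] at h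
    linarith
  have h := intervalIntegral.integral_mono_on hab intervalIntegrable_const (hint.add hint') hmid
  rw [intervalIntegral.integral_const, intervalIntegral.integral_add hint hint', hreflect,
    smul_eq_mul] at h
  linarith

theorem midpointSum_le_integral_of_convexOn (hab : a ≤ b) (hf : ConvexOn ℝ (Icc a b) f)
    (hint : IntervalIntegrable f volume a b) {n : ℕ} (hn : n ≠ 0) :
    ∑ k ∈ Finset.range n, (b - a) / n * f (a + (2 * k + 1) / (2 * n) * (b - a)) ≤
      ∫ x in a..b, f x := by
  let t : ℕ → ℝ := fun k ↦ a + k / n * (b - a)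
  have hn' : (n : ℝ) ≠ 0 := Nat.cast_ne_zero.mpr hn
  have ht : Monotone t := fun i j hij ↦ by
    have : 0 ≤ b - a := sub_nonneg.mpr hab
    dsimp only [t]
    gcongr
  have ht0 : t 0 = a := by simp [t]
  have htn : t n = b := by simp [t, hn']
  have hcell : ∀ k < n, Icc (t k) (t (k + 1)) ⊆ Icc a b := fun k hk ↦
    Icc_subset_Icc (ht0 ▸ ht (Nat.zero_le k)) (htn ▸ ht hk)
  have hcell_int : ∀ k < n, IntervalIntegrable f volume (t k) (t (k + 1)) := fun k hk ↦
    hint.mono_set <| by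
      simpa only [uIcc_of_le hab, uIcc_of_le (ht k.le_succ)] using hcell k hk
  calc ∑ k ∈ Finset.range n, (b - a) / n * f (a + (2 * k + 1) / (2 * n) * (b - a))
      = ∑ k ∈ Finset.range n, (t (k + 1) - t k) * f ((t k + t (k + 1)) / 2) := by
        refine Finset.sum_congr rfl fun k _ ↦ ?_
        congr 2 <;> simp only [t, Nat.cast_add, Nat.cast_one] <;> field_simp <;> ring
    _ ≤ ∑ k ∈ Finset.range n, ∫ x in t k..t (k + 1), f x := by
        refine Finset.sum_le_sum fun k hk ↦ ?_
        rw [Finset.mem_range] at hk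
        exact midpoint_mul_le_integral_of_convexOn (ht k.le_succ)
          (hf.subset (hcell k hk) (convex_Icc _ _)) (hcell_int k hk)
    _ = ∫ x in a..b, f x := by
        rw [intervalIntegral.sum_integral_adjacent_intervals hcell_int, ht0, htn]

end Analysis

/-- `F` is the cumulative distribution function of a probability measure on `[0, 1]` with continuous
density `f`, positive in the interior. At the endpoints `f` may vanish and `F` need not be
differentiable. -/
structure HasPositiveDensity (F f : ℝ → ℝ) : Prop where
  continuousOn_cdf : ContinuousOn F (Icc 0 1)
  cdf_zero : F 0 = 0
  cdf_one : F 1 = 1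
  hasDerivAt : ∀ x ∈ Ioo (0 : ℝ) 1, HasDerivAt F (f x) x
  continuousOn_density : ContinuousOn f (Icc 0 1)
  density_pos : ∀ x ∈ Ioo (0 : ℝ) 1, 0 < f x

/-- `y` solves `F ∘ y = 1 - F` on `[0, 1]`: it is the map `F⁻¹ ∘ (1 - F)` that exchanges the lower
and upper quantiles of the distribution `F`. Values of `y` outside `[0, 1]` are unconstrained. -/
def IsReversal (F y : ℝ → ℝ) : Prop :=
  ∀ x ∈ Icc (0 : ℝ) 1, y x ∈ Icc (0 : ℝ) 1 ∧ F (y x) = 1 - F x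

/-- The unnormalised mean over `[0, x]` of the distribution with density `f`; composed with a
reversal, it is the integrand left after integrating by parts. -/
noncomputable def truncatedMean (f : ℝ → ℝ) (x : ℝ) : ℝ := ∫ t in (0 : ℝ)..x, t * f t

theorem continuousOn_truncatedMean {f : ℝ → ℝ} (hf : ContinuousOn f (Icc 0 1)) :
    ContinuousOn (truncatedMean f) (Icc 0 1) := by
  have hint : IntegrableOn (fun t ↦ t * f t) (uIcc 0 1) := by
    rw [uIcc_of_le zero_le_one]
    exact (continuousOn_id.mul hf).integrableOn_Icc
  simpa only [uIcc_of_le zero_le_one] using!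
    intervalIntegral.continuousOn_primitive_interval hint

theorem hasDerivAt_truncatedMean {f : ℝ → ℝ} {x : ℝ} (hf : ContinuousOn f (Icc 0 1))
    (hx : x ∈ Ioo (0 : ℝ) 1) : HasDerivAt (truncatedMean f) (x * f x) x := by
  have hcont : ContinuousOn (fun t ↦ t * f t) (Icc 0 1) := continuousOn_id.mul hf
  refine intervalIntegral.integral_hasDerivAt_right ?_ ?_ ?_
  · exact (hcont.mono (Icc_subset_Icc_right hx.2.le)).intervalIntegrable_of_Icc hx.1.le
  · exact (hcont.mono Ioo_subset_Icc_self).stronglyMeasurableAtFilter isOpen_Ioo x hx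
  · exact hcont.continuousAt (Icc_mem_nhds hx.1 hx.2)

namespace HasPositiveDensity

variable {F f : ℝ → ℝ} {x : ℝ}

theorem strictMonoOn (h : HasPositiveDensity F f) : StrictMonoOn F (Icc 0 1) := by
  refine strictMonoOn_of_deriv_pos (convex_Icc 0 1) h.continuousOn_cdf fun x hx ↦ ?_
  rw [interior_Icc] at hx
  rw [(h.hasDerivAt x hx).deriv]
  exact h.density_pos x hx

theorem continuousAt_density (h : HasPositiveDensity F f) (hx : x ∈ Ioo (0 : ℝ) 1) :
    ContinuousAt f x :=
  h.continuousOn_density.continuousAt (Icc_mem_nhds hx.1 hx.2)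

theorem hasStrictDerivAt (h : HasPositiveDensity F f) (hx : x ∈ Ioo (0 : ℝ) 1) :
    HasStrictDerivAt F (f x) x :=
  hasStrictDerivAt_of_hasDerivAt_of_continuousAt
    (Filter.mem_of_superset (Ioo_mem_nhds hx.1 hx.2) h.hasDerivAt) (h.continuousAt_density hx)

end HasPositiveDensity

namespace IsReversal

variable {F f y : ℝ → ℝ} {x : ℝ}

theorem mapsTo_Icc (hy : IsReversal F y) : MapsTo y (Icc 0 1) (Icc 0 1) :=
  fun x hx ↦ (hy x hx).1

theorem strictAntiOn (hy : IsReversal F y) (h : HasPositiveDensity F f) :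
    StrictAntiOn y (Icc 0 1) := by
  intro a ha b hb hab
  rw [← h.strictMonoOn.lt_iff_lt (hy b hb).1 (hy a ha).1, (hy a ha).2, (hy b hb).2]
  exact sub_lt_sub_left (h.strictMonoOn ha hb hab) 1

theorem apply_one (hy : IsReversal F y) (h : HasPositiveDensity F f) : y 1 = 0 := by
  have h0 : (0 : ℝ) ∈ Icc (0 : ℝ) 1 := left_mem_Icc.mpr zero_le_one
  have h1 : (1 : ℝ) ∈ Icc (0 : ℝ) 1 := right_mem_Icc.mpr zero_le_one
  refine h.strictMonoOn.injOn (hy 1 h1).1 h0 ?_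
  rw [(hy 1 h1).2, h.cdf_one, h.cdf_zero, sub_self]

theorem mapsTo_Ioo (hy : IsReversal F y) (h : HasPositiveDensity F f) :
    MapsTo y (Ioo 0 1) (Ioo 0 1) := by
  intro x hx
  have h0 : (0 : ℝ) ∈ Icc (0 : ℝ) 1 := left_mem_Icc.mpr zero_le_one
  have h1 : (1 : ℝ) ∈ Icc (0 : ℝ) 1 := right_mem_Icc.mpr zero_le_one
  have hx' := Ioo_subset_Icc_self hx
  exact ⟨(hy 1 h1).1.1.trans_lt (hy.strictAntiOn h hx' h1 hx.2),
    (hy.strictAntiOn h h0 hx' hx.1).trans_le (hy 0 h0).1.2⟩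

theorem continuousOn (hy : IsReversal F y) (h : HasPositiveDensity F f) :
    ContinuousOn y (Icc 0 1) :=
  continuousOn_of_comp_isCompact isCompact_Icc h.continuousOn_cdf h.strictMonoOn.injOn
    hy.mapsTo_Icc <|
    (continuousOn_const.sub h.continuousOn_cdf).congr fun x hx ↦ (hy x hx).2

theorem hasDerivAt (hy : IsReversal F y) (h : HasPositiveDensity F f)
    (hx : x ∈ Ioo (0 : ℝ) 1) : HasDerivAt y ((f (y x))⁻¹ * -f x) x := by
  have hyx := hy.mapsTo_Ioo h hx
  have hnhds : Icc (0 : ℝ) 1 ∈ nhds x := Icc_mem_nhds hx.1 hx.2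
  refine hasDerivAt_of_comp_hasStrictDerivAt (h.hasStrictDerivAt hyx) (h.density_pos _ hyx).ne'
    ((hy.continuousOn h).continuousAt hnhds) ?_
  refine ((h.hasDerivAt x hx).const_sub 1).congr_of_eventuallyEq ?_
  filter_upwards [hnhds] with z hz using (hy z hz).2

theorem hasDerivAt_truncatedMean_comp (hy : IsReversal F y) (h : HasPositiveDensity F f)
    (hx : x ∈ Ioo (0 : ℝ) 1) :
    HasDerivAt (truncatedMean f ∘ y) (-(y x * f x)) x := by
  have hyx := hy.mapsTo_Ioo h hx
  have hne : f (y x) ≠ 0 := (h.density_pos _ hyx).ne'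
  refine ((hasDerivAt_truncatedMean h.continuousOn_density hyx).comp x
    (hy.hasDerivAt h hx)).congr_deriv ?_
  rw [mul_assoc, mul_inv_cancel_left₀ hne, mul_neg]

theorem continuousOn_truncatedMean_comp (hy : IsReversal F y) (h : HasPositiveDensity F f) :
    ContinuousOn (truncatedMean f ∘ y) (Icc 0 1) :=
  (continuousOn_truncatedMean h.continuousOn_density).comp (hy.continuousOn h) hy.mapsTo_Icc

theorem convexOn_truncatedMean_comp (hy : IsReversal F y) (h : HasPositiveDensity F f)
    (hf : AntitoneOn f (Icc 0 1)) : ConvexOn ℝ (Icc 0 1) (truncatedMean f ∘ y) := by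
  refine MonotoneOn.convexOn_of_deriv (convex_Icc 0 1) (hy.continuousOn_truncatedMean_comp h) ?_ ?_
  all_goals rw [interior_Icc]
  · exact fun x hx ↦ (hy.hasDerivAt_truncatedMean_comp h hx).differentiableAt.differentiableWithinAt
  · intro a ha b hb hab
    have ha' := Ioo_subset_Icc_self ha
    have hb' := Ioo_subset_Icc_self hb
    rw [(hy.hasDerivAt_truncatedMean_comp h ha).deriv,
      (hy.hasDerivAt_truncatedMean_comp h hb).deriv]
    exact neg_le_neg <| mul_le_mul ((hy.strictAntiOn h).antitoneOn ha' hb' hab)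
      (hf ha' hb' hab) (h.density_pos b hb).le (hy a ha').1.1

theorem integral_mul_eq_integral_truncatedMean (hy : IsReversal F y)
    (h : HasPositiveDensity F f) :
    ∫ x in (0 : ℝ)..1, x * y x * f x = ∫ x in (0 : ℝ)..1, truncatedMean f (y x) := by
  have hI : uIcc (0 : ℝ) 1 = Icc 0 1 := uIcc_of_le zero_le_one
  have hderiv_int : IntervalIntegrable (fun x ↦ -(y x * f x)) volume 0 1 :=
    ((hy.continuousOn h).mul h.continuousOn_density).neg.intervalIntegrable_of_Icc zero_le_one
  have hparts := intervalIntegral.integral_mul_deriv_eq_deriv_mul_of_hasDerivAt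
    (u := fun x ↦ x) (v := truncatedMean f ∘ y) (u' := fun _ ↦ 1) (v' := fun x ↦ -(y x * f x))
    continuousOn_id (hI ▸ hy.continuousOn_truncatedMean_comp h) (fun x _ ↦ hasDerivAt_id x)
    (fun x hx ↦ hy.hasDerivAt_truncatedMean_comp h (by simpa using hx))
    intervalIntegrable_const hderiv_int
  have hboundary : truncatedMean f (y 1) = 0 := by
    rw [hy.apply_one h, truncatedMean, intervalIntegral.integral_same]
  simp only [Function.comp_apply, hboundary, mul_zero, zero_mul, sub_zero, zero_sub, one_mul,
    mul_neg, intervalIntegral.integral_neg, neg_inj] at hparts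
  simpa only [mul_assoc] using hparts

theorem midpointSum_le_integral_mul (hy : IsReversal F y) (h : HasPositiveDensity F f)
    (hf : AntitoneOn f (Icc 0 1)) {n : ℕ} (hn : n ≠ 0) :
    ∑ k ∈ Finset.range n, 1 / n * truncatedMean f (y ((2 * k + 1) / (2 * n))) ≤
      ∫ x in (0 : ℝ)..1, x * y x * f x := by
  rw [hy.integral_mul_eq_integral_truncatedMean h]
  simpa using! midpointSum_le_integral_of_convexOn zero_le_one (hy.convexOn_truncatedMean_comp h hf)
    ((hy.continuousOn_truncatedMean_comp h).intervalIntegrable_of_Icc zero_le_one) hn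

end IsReversal

open Real

section SatoTate

/-- The density on `[0, 1]` of `|cos θ|` under the Sato–Tate measure, twice that of `cos θ`. -/
noncomputable def satoTateDensity (x : ℝ) : ℝ := 4 / π * √(1 - x ^ 2)

theorem hasDerivAt_sqrt_one_sub_sq {x : ℝ} (hx : x ∈ Ioo (-1 : ℝ) 1) :
    HasDerivAt (fun t ↦ √(1 - t ^ 2)) (-x / √(1 - x ^ 2)) x := by
  have hpos : 0 < 1 - x ^ 2 := by nlinarith [hx.1, hx.2]
  refine (((hasDerivAt_pow 2 x).const_sub 1).sqrt hpos.ne').congr_deriv ?_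
  field_simp
  norm_num

theorem hasDerivAt_satoTateCDF {x : ℝ} (hx : x ∈ Ioo (-1 : ℝ) 1) :
    HasDerivAt satoTateCDF (satoTateDensity x) x := by
  have hpos : 0 < 1 - x ^ 2 := by nlinarith [hx.1, hx.2]
  have hsqrt : √(1 - x ^ 2) ≠ 0 := (sqrt_pos.mpr hpos).ne'
  refine ((((hasDerivAt_id x).mul (hasDerivAt_sqrt_one_sub_sq hx)).add
    (hasDerivAt_arcsin hx.1.ne' hx.2.ne)).const_mul (2 / π)).congr_deriv ?_
  simp only [satoTateDensity, id]
  field_simp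
  rw [sq_sqrt hpos.le]
  ring

theorem hasPositiveDensity_satoTateCDF : HasPositiveDensity satoTateCDF satoTateDensity where
  continuousOn_cdf := by
    have := continuous_arcsin
    unfold satoTateCDF
    fun_prop
  cdf_zero := by simp [satoTateCDF]
  cdf_one := by simp [satoTateCDF, pi_ne_zero]
  hasDerivAt x hx := hasDerivAt_satoTateCDF ⟨by linarith [hx.1], hx.2⟩
  continuousOn_density := by
    unfold satoTateDensity
    fun_prop
  density_pos x hx := by
    have : 0 < 1 - x ^ 2 := by nlinarith [hx.1, hx.2]
    unfold satoTateDensity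
    positivity

theorem antitoneOn_satoTateDensity : AntitoneOn satoTateDensity (Icc 0 1) := by
  intro a ha b _ hab
  have := ha.1
  unfold satoTateDensity
  gcongr

theorem truncatedMean_satoTateDensity {x : ℝ} (hx : x ∈ Icc (0 : ℝ) 1) :
    truncatedMean satoTateDensity x = 4 / (3 * π) * (1 - √(1 - x ^ 2) ^ 3) := by
  let M : ℝ → ℝ := fun t ↦ -(4 / (3 * π)) * √(1 - t ^ 2) ^ 3
  have hderiv : ∀ t ∈ Ioo 0 x, HasDerivAt M (t * satoTateDensity t) t := by
    intro t ht
    have ht' : t ∈ Ioo (-1 : ℝ) 1 := ⟨by linarith [ht.1], ht.2.trans_le hx.2⟩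
    have hsqrt : √(1 - t ^ 2) ≠ 0 := (sqrt_pos.mpr (by nlinarith [ht'.1, ht'.2])).ne'
    refine (((hasDerivAt_sqrt_one_sub_sq ht').pow 3).const_mul (-(4 / (3 * π)))).congr_deriv ?_
    simp only [satoTateDensity]
    field_simp
    norm_num
  have hint : IntervalIntegrable (fun t ↦ t * satoTateDensity t) volume 0 x :=
    Continuous.intervalIntegrable (by unfold satoTateDensity; fun_prop) _ _
  rw [truncatedMean, intervalIntegral.integral_eq_sub_of_hasDerivAt_of_le hx.1
    (by fun_prop) hderiv hint]
  simp only [M]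
  norm_num
  ring

theorem truncatedMean_satoTateDensity_ge {q x c : ℝ} (hq : 0 ≤ q) (hx : x ∈ Icc q 1)
    (hc : √(1 - q ^ 2) ≤ c) :
    4 / (3 * π) * (1 - c ^ 3) ≤ truncatedMean satoTateDensity x := by
  rw [truncatedMean_satoTateDensity ⟨hq.trans hx.1, hx.2⟩]
  have hqx := hx.1
  gcongr
  exact (sqrt_le_sqrt (by gcongr)).trans hc

-- Going through the half angle turns the upper bound for `sin` into a lower bound for `cos` that is
-- sharper than the one the library has for `cos` itself.
theorem one_sub_two_mul_sq_le_cos {x : ℝ} (h0 : 0 ≤ x) (h2 : x ≤ 2) :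
    1 - 2 * (x / 2 - (x / 2) ^ 3 / 6 + (x / 2) ^ 5 / 100) ^ 2 ≤ cos x := by
  have habs : |x / 2| = x / 2 := abs_of_nonneg (by linarith)
  have hbound := sin_bound (x := x / 2) (by rw [habs]; linarith)
  rw [habs, abs_le] at hbound
  have hsin : 0 ≤ sin (x / 2) :=
    sin_nonneg_of_nonneg_of_le_pi (by linarith) (by linarith [pi_gt_three])
  have hsq : sin (x / 2) ^ 2 ≤ (x / 2 - (x / 2) ^ 3 / 6 + (x / 2) ^ 5 / 100) ^ 2 := by
    gcongr
    linarith [hbound.2]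
  have hcos : cos x = 1 - 2 * sin (x / 2) ^ 2 := by
    rw [← cos_two_mul_eq_one_sub, mul_div_cancel₀ x two_ne_zero]
  linarith

theorem satoTateCDF_le_one_sub {x q s c : ℝ} (hx : 0 ≤ x) (hq : 0 ≤ q)
    (hxq : x ^ 2 + q ^ 2 ≤ 1) (hs : √(1 - x ^ 2) ≤ s) (hc : √(1 - q ^ 2) ≤ c)
    (hpi : x * s + q * c ≤ π) (hcos : x * c + q * s ≤ cos (x * s + q * c)) :
    satoTateCDF q ≤ 1 - satoTateCDF x := by
  have hx1 : x ≤ 1 := by nlinarith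
  have hq1 : q ≤ 1 := by nlinarith
  set R := x * √(1 - x ^ 2) + q * √(1 - q ^ 2) with hR
  have hR0 : 0 ≤ R := by positivity
  have hRle : R ≤ x * s + q * c := by rw [hR]; gcongr
  have hsum : arcsin x + arcsin q ≤ π / 2 := by
    have hq' : arcsin q ≤ arccos x := by
      rw [arccos_eq_arcsin hx]
      exact monotone_arcsin (le_sqrt_of_sq_le (by linarith))
    linarith [arccos_eq_pi_div_two_sub_arcsin x]
  have hsin : sin (arcsin x + arcsin q) ≤ sin (π / 2 - R) := calc
    sin (arcsin x + arcsin q) = x * √(1 - q ^ 2) + q * √(1 - x ^ 2) := by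
      rw [sin_add, sin_arcsin (by linarith) hx1, sin_arcsin (by linarith) hq1, cos_arcsin,
        cos_arcsin, mul_comm q]
    _ ≤ x * c + q * s := by gcongr
    _ ≤ cos (x * s + q * c) := hcos
    _ ≤ cos R := cos_le_cos_of_nonneg_of_le_pi hR0 hpi hRle
    _ = sin (π / 2 - R) := (sin_pi_div_two_sub R).symm
  have hangle : arcsin x + arcsin q ≤ π / 2 - R := by
    by_contra! hlt
    have hleft : -(π / 2) ≤ π / 2 - R := by linarith [hRle.trans hpi]
    exact hsin.not_gt (sin_lt_sin_of_lt_of_le_pi_div_two hleft hsum hlt)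
  have hcdf : satoTateCDF q + satoTateCDF x = 2 / π * (R + (arcsin x + arcsin q)) := by
    rw [satoTateCDF, satoTateCDF, hR]
    ring
  have hle : 2 / π * (R + (arcsin x + arcsin q)) ≤ 2 / π * (π / 2) := by
    gcongr
    linarith
  rw [div_mul_div_cancel₀ pi_ne_zero, div_self two_ne_zero] at hle
  linarith

/-- Rational data certifying `q ≤ y x` for the Sato–Tate reversal `y`, where `s` and `c` bound
`√(1 - x²)` and `√(1 - q²)` from above. The last clause is `sin (θ + φ) ≤ cos R` for `x = sin θ` and
`q = sin φ`, with the cosine replaced by the polynomial of `one_sub_two_mul_sq_le_cos`. -/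
def IsNodeCertificate (x s q c : ℚ) : Prop :=
  0 ≤ s ∧ 0 ≤ q ∧ 0 ≤ c ∧ 1 - x ^ 2 ≤ s ^ 2 ∧ 1 - q ^ 2 ≤ c ^ 2 ∧ x ^ 2 + q ^ 2 ≤ 1 ∧
    x * s + q * c ≤ 2 ∧
    let r := (x * s + q * c) / 2
    x * c + q * s ≤ 1 - 2 * (r - r ^ 3 / 6 + r ^ 5 / 100) ^ 2

theorem IsNodeCertificate.truncatedMean_ge {x s q c : ℚ} (h : IsNodeCertificate x s q c)
    (hx : (x : ℝ) ∈ Icc (0 : ℝ) 1) {y : ℝ → ℝ} (hy : IsReversal satoTateCDF y) :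
    4 / (3 * π) * (1 - (c : ℝ) ^ 3) ≤ truncatedMean satoTateDensity (y x) := by
  obtain ⟨hs, hq, hc, hxs, hqc, hxq, h2, hcos⟩ := h
  have hs : (0 : ℝ) ≤ s := by exact_mod_cast hs
  have hq : (0 : ℝ) ≤ q := by exact_mod_cast hq
  have hc : (0 : ℝ) ≤ c := by exact_mod_cast hc
  have hxq : (x : ℝ) ^ 2 + (q : ℝ) ^ 2 ≤ 1 := by exact_mod_cast hxq
  have h2 : (x * s + q * c : ℝ) ≤ 2 := by exact_mod_cast h2
  have hxs : √(1 - (x : ℝ) ^ 2) ≤ s := sqrt_le_iff.mpr ⟨hs, by exact_mod_cast hxs⟩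
  have hqc : √(1 - (q : ℝ) ^ 2) ≤ c := sqrt_le_iff.mpr ⟨hc, by exact_mod_cast hqc⟩
  have hcos : (x * c + q * s : ℝ) ≤ cos (x * s + q * c) := by
    have hx0 := hx.1
    refine le_trans ?_ (one_sub_two_mul_sq_le_cos (by positivity) h2)
    exact_mod_cast hcos
  have hq1 : (q : ℝ) ≤ 1 := by nlinarith
  have hcdf : satoTateCDF q ≤ satoTateCDF (y x) := (hy x hx).2 ▸
    satoTateCDF_le_one_sub hx.1 hq hxq hxs hqc (h2.trans two_le_pi) hcos
  have hqy : (q : ℝ) ≤ y x :=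
    (hasPositiveDensity_satoTateCDF.strictMonoOn.le_iff_le ⟨hq, hq1⟩ (hy x hx).1).mp hcdf
  exact truncatedMean_satoTateDensity_ge hq ⟨hqy, (hy x hx).1.2⟩ hqc

/-- The triples `(s, q, c)` of `IsNodeCertificate` at the midpoints `x = (2 * k + 1) / 48`, found by
a numerical search over five-digit decimals. -/
def nodeCertificate : Fin 24 → ℚ × ℚ × ℚ :=
  ![(0.99979, 0.92058, 0.39056), (0.99805, 0.83343, 0.55263), (0.99456, 0.76430, 0.64487),
    (0.98931, 0.70340, 0.71080), (0.98227, 0.64766, 0.76193), (0.97339, 0.59562, 0.80327),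
    (0.96263, 0.54646, 0.83749), (0.94992, 0.49970, 0.86620), (0.93519, 0.45497, 0.89051),
    (0.91833, 0.41212, 0.91113), (0.89922, 0.37096, 0.92865), (0.87773, 0.33141, 0.94349),
    (0.85366, 0.29340, 0.95599), (0.82680, 0.25697, 0.96642), (0.79686, 0.22212, 0.97502),
    (0.76348, 0.18889, 0.98200), (0.72619, 0.15737, 0.98754), (0.68434, 0.12765, 0.99182),
    (0.63704, 0.09988, 0.99500), (0.58297, 0.07438, 0.99723), (0.52000, 0.05117, 0.99869),
    (0.44440, 0.03099, 0.99952), (0.34799, 0.01415, 0.99990), (0.20306, 0.00000, 1.00000)]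

theorem isNodeCertificate_nodeCertificate (k : Fin 24) :
    IsNodeCertificate ((2 * k + 1) / 48) (nodeCertificate k).1 (nodeCertificate k).2.1
      (nodeCertificate k).2.2 := by
  unfold IsNodeCertificate
  fin_cases k <;> norm_num [nodeCertificate]

theorem sum_nodeCertificate_ge :
    6283 / 1000 ≤ ∑ k : Fin 24, (1 - (nodeCertificate k).2.2 ^ 3) := by
  norm_num [nodeCertificate, Fin.sum_univ_succ]

theorem le_midpointSum_satoTate {y : ℝ → ℝ} (hy : IsReversal satoTateCDF y) :
    4 / (3 * π) * (6283 / 1000 / 24) ≤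
      ∑ k ∈ Finset.range 24,
        1 / ((24 : ℕ) : ℝ) * truncatedMean satoTateDensity (y ((2 * k + 1) / (2 * (24 : ℕ)))) := by
  have hsum : (6283 / 1000 : ℝ) ≤ ∑ k : Fin 24, (1 - ((nodeCertificate k).2.2 : ℝ) ^ 3) := by
    have h := (Rat.cast_le (K := ℝ)).mpr sum_nodeCertificate_ge
    push_cast at h
    exact h
  have hnode (k : Fin 24) : 4 / (3 * π) * (1 - ((nodeCertificate k).2.2 : ℝ) ^ 3) ≤
      truncatedMean satoTateDensity (y ((2 * (k : ℕ) + 1) / (2 * (24 : ℕ)))) := by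
    have hk : ((k : ℕ) : ℝ) + 1 ≤ 24 := by exact_mod_cast k.isLt
    have h := (isNodeCertificate_nodeCertificate k).truncatedMean_ge
      ⟨by positivity, by push_cast; linarith⟩ hy
    convert h using 3
    push_cast
    norm_num
  rw [Finset.sum_range]
  calc 4 / (3 * π) * (6283 / 1000 / 24)
      ≤ 4 / (3 * π) * ((∑ k : Fin 24, (1 - ((nodeCertificate k).2.2 : ℝ) ^ 3)) / 24) := by gcongr
    _ = ∑ k : Fin 24, 1 / ((24 : ℕ) : ℝ) *
          (4 / (3 * π) * (1 - ((nodeCertificate k).2.2 : ℝ) ^ 3)) := by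
        rw [← Finset.mul_sum, ← Finset.mul_sum]
        push_cast
        ring
    _ ≤ _ := Finset.sum_le_sum fun k _ ↦ mul_le_mul_of_nonneg_left (hnode k) (by positivity)

end SatoTate

/-- Numerical lower bound `C₂ ≥ 0.11109` for the rearrangement integral. -/
theorem sato_tate_rearrangement_bound (y : ℝ → ℝ)
    (hy : ∀ x ∈ Set.Icc (0 : ℝ) 1, y x ∈ Set.Icc (0 : ℝ) 1 ∧
      satoTateCDF (y x) = 1 - satoTateCDF x) :
    0.11109 ≤ ∫ x in Set.Icc (0 : ℝ) 1,
      x * y x * ((4 / Real.pi) * Real.sqrt (1 - x ^ 2)) := by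
  have hrev : IsReversal satoTateCDF y := hy
  rw [integral_Icc_eq_integral_Ioc, ← intervalIntegral.integral_of_le zero_le_one]
  calc (0.11109 : ℝ) ≤ 4 / (3 * π) * (6283 / 1000 / 24) := by
        rw [div_mul_div_comm, le_div_iff₀ (by positivity)]
        linarith [pi_lt_d4]
    _ ≤ _ := le_midpointSum_satoTate hrev
    _ ≤ _ := hrev.midpointSum_le_integral_mul hasPositiveDensity_satoTateCDF
      antitoneOn_satoTateDensity (by norm_num)
end
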